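/- Let (S,𝔖,μ) and (T,𝔗,ν) be measure spaces over σ-rings. There exists a unique measure μ⊗ν on the product σ-ring 𝔖 ⊗ 𝔗 whose σ-finite component equals μ^σ ⊗ ν^σ, i.e., such that (i) (μ⊗ν)(A × B) = μ(A)·ν(B) for all A with μ(A) < ∞ and B with ν(B) < ∞, and (ii) the σ-ring of (μ⊗ν)-σ-finite sets is generated by rectangles A × B of sets of finite measure. -/

import Mathlib

open Set ENNReal

/-- A family of sets is a σ-ring if it contains `∅` and is closed under
set differences and countable unions. -/
def IsSigmaRing {α : Type*} (C : Set (Set α)) : Prop :=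
  ∅ ∈ C ∧ (∀ A B : Set α, A ∈ C → B ∈ C → A \ B ∈ C) ∧
    ∀ f : ℕ → Set α, (∀ n, f n ∈ C) → (⋃ n, f n) ∈ C

/-- The σ-ring generated by a family of sets. -/
def genSR {α : Type*} (D : Set (Set α)) : Set (Set α) :=
  ⋂₀ {C | IsSigmaRing C ∧ D ⊆ C}

/-- A measure on a σ-ring: countably additive, vanishing on `∅`. -/
def IsMeasure {α : Type*} (C : Set (Set α)) (μ : Set α → ℝ≥0∞) : Prop :=
  μ ∅ = 0 ∧ ∀ f : ℕ → Set α, (∀ n, f n ∈ C) →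
    Pairwise (Function.onFun Disjoint f) → μ (⋃ n, f n) = ∑' n, μ (f n)

/-- The family of μ-σ-finite sets: countable unions of sets of finite measure. -/
def sigmaFin {α : Type*} (C : Set (Set α)) (μ : Set α → ℝ≥0∞) : Set (Set α) :=
  {A | ∃ g : ℕ → Set α, (∀ n, g n ∈ C ∧ μ (g n) < ⊤) ∧ A = ⋃ n, g n}

/-- Restriction of a family of sets to a set `S`. -/
def restrictFam {α : Type*} (D : Set (Set α)) (S : Set α) : Set (Set α) :=
  (fun A => A ∩ S) '' D

/-- The product σ-ring, generated by measurable rectangles. -/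
def prodSR {α β : Type*} (S : Set (Set α)) (T : Set (Set β)) : Set (Set (α × β)) :=
  genSR {R | ∃ A ∈ S, ∃ B ∈ T, R = A ×ˢ B}

/-- The σ-algebra generated by a family of sets. -/
def genSA {α : Type*} (D : Set (Set α)) : MeasurableSpace α :=
  MeasurableSpace.generateFrom D

/-- The (extended) Lebesgue integral of a nonnegative function with respect to a
measure on a σ-ring, as the supremum of integrals of simple functions below it. -/
noncomputable def lintSR {α : Type*} (C : Set (Set α)) (μ : Set α → ℝ≥0∞)
    (f : α → ℝ≥0∞) : ℝ≥0∞ :=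
  ⨆ (n : ℕ) (c : Fin n → ℝ≥0∞) (A : Fin n → Set α) (_ : ∀ i, A i ∈ C)
    (_ : ∀ x, (∑ i, (A i).indicator (fun _ => c i) x) ≤ f x),
    ∑ i, c i * μ (A i)

/-- The positive part of an extended real, as an `ℝ≥0∞`. -/
noncomputable def epos (x : EReal) : ℝ≥0∞ := (x ⊔ 0).abs

/-- Measurability of an extended-real function with respect to a σ-ring:
measurable for the generated σ-algebra, with support in the σ-ring. -/
def SRMeasurableE {α : Type*} (C : Set (Set α)) (f : α → EReal) : Prop :=
  @Measurable α EReal (genSA C) _ f ∧ {x | f x ≠ 0} ∈ C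

/-- The Lebesgue integral of an extended-real function w.r.t. a measure on a σ-ring. -/
noncomputable def integralE {α : Type*} (C : Set (Set α)) (μ : Set α → ℝ≥0∞)
    (f : α → EReal) : EReal :=
  ((lintSR C μ fun x => epos (f x) : ℝ≥0∞) : EReal) -
    ((lintSR C μ fun x => epos (-f x) : ℝ≥0∞) : EReal)

/-- Integrability of an extended-real function w.r.t. a measure on a σ-ring. -/
def IntegrableE {α : Type*} (C : Set (Set α)) (μ : Set α → ℝ≥0∞)
    (f : α → EReal) : Prop :=
  SRMeasurableE C f ∧ lintSR C μ (fun x => (f x).abs) < ⊤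

/-- `lam` is the product of the measures `μ` and `ν` on σ-rings `S`, `T`:
the unique measure on the product σ-ring whose σ-finite component is the Halmos
product of the σ-finite components. -/
def IsProdMeasure {α β : Type*} (S : Set (Set α)) (T : Set (Set β))
    (μ : Set α → ℝ≥0∞) (ν : Set β → ℝ≥0∞) (lam : Set (α × β) → ℝ≥0∞) : Prop :=
  IsMeasure (prodSR S T) lam ∧
  (∀ A ∈ S, ∀ B ∈ T, μ A < ⊤ → ν B < ⊤ → lam (A ×ˢ B) = μ A * ν B) ∧
  sigmaFin (prodSR S T) lam =
    genSR {R | ∃ A ∈ S, ∃ B ∈ T, μ A < ⊤ ∧ ν B < ⊤ ∧ R = A ×ˢ B}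

/-!
A measure is infinite off its σ-finite sets, so it is determined by its σ-finite component.
The rectangles with sides of finite measure form a π-system, so the values on them determine a
measure on the σ-ring they generate; together these give uniqueness.

For existence, restrict `μ` and `ν` to sets `A` and `B` of finite measure. The products of these
finite measures increase with `A` and `B`, and their supremum is the Halmos product of the
σ-finite components. Since the finite rectangles generate an ideal of the product σ-ring,
assigning the value `⊤` off this ideal keeps the measure countably additive.
-/

open MeasureTheory

section SigmaRing

variable {α : Type*} {C D : Set (Set α)} {A B : Set α}

namespace IsSigmaRing

theorem empty_mem (hC : IsSigmaRing C) : ∅ ∈ C := hC.1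

theorem diff_mem (hC : IsSigmaRing C) (hA : A ∈ C) (hB : B ∈ C) : A \ B ∈ C :=
  hC.2.1 A B hA hB

theorem iUnion_mem (hC : IsSigmaRing C) {f : ℕ → Set α} (hf : ∀ n, f n ∈ C) : (⋃ n, f n) ∈ C :=
  hC.2.2 f hf

theorem inter_mem (hC : IsSigmaRing C) (hA : A ∈ C) (hB : B ∈ C) : A ∩ B ∈ C := by
  rw [← sdiff_sdiff_right_self]
  exact hC.diff_mem hA (hC.diff_mem hA hB)

theorem union_mem (hC : IsSigmaRing C) (hA : A ∈ C) (hB : B ∈ C) : A ∪ B ∈ C := by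
  let f : ℕ → Set α := fun n => n.casesOn A fun _ => B
  have hf : A ∪ B = ⋃ n, f n := by
    rw [← union_iUnion_nat_succ f, iUnion_const]
    rfl
  rw [hf]
  exact hC.iUnion_mem (Nat.rec hA fun _ _ => hB)

theorem disjointed_mem (hC : IsSigmaRing C) {f : ℕ → Set α} (hf : ∀ n, f n ∈ C) (n : ℕ) :
    disjointed f n ∈ C :=
  disjointedRec (p := (· ∈ C)) (fun _ i ht => hC.diff_mem ht (hf i)) (hf n)

end IsSigmaRing

theorem isSigmaRing_measurableSet (m : MeasurableSpace α) :
    IsSigmaRing {A | MeasurableSet[m] A} :=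
  ⟨MeasurableSet.empty, fun _ _ hA hB => MeasurableSet.diff hA hB,
    fun _ hf => MeasurableSet.iUnion hf⟩

theorem isSigmaRing_genSR (D : Set (Set α)) : IsSigmaRing (genSR D) :=
  ⟨fun _ hC => hC.1.empty_mem,
    fun _ _ hA hB _ hC => hC.1.diff_mem (hA _ hC) (hB _ hC),
    fun _ hf _ hC => hC.1.iUnion_mem fun n => hf n _ hC⟩

theorem subset_genSR (D : Set (Set α)) : D ⊆ genSR D :=
  fun _ hA _ hC => hC.2 hA

theorem genSR_subset (hC : IsSigmaRing C) (h : D ⊆ C) : genSR D ⊆ C :=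
  fun _ hA => hA _ ⟨hC, h⟩

theorem measurableSet_of_mem_genSR {m : MeasurableSpace α} (h : ∀ A ∈ D, MeasurableSet[m] A)
    (hA : A ∈ genSR D) : MeasurableSet[m] A :=
  genSR_subset (isSigmaRing_measurableSet m) h hA

/-- The σ-algebra of sets locally in the σ-ring `C`: those whose intersection with each member
of `C` belongs to `C`. It makes Mathlib's measures available on a σ-ring, and `C` is an ideal in
it. -/
abbrev IsSigmaRing.locallyMeasurable (hC : IsSigmaRing C) : MeasurableSpace α where
  MeasurableSet' E := ∀ A ∈ C, E ∩ A ∈ C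
  measurableSet_empty A _ := by simpa only [empty_inter] using hC.empty_mem
  measurableSet_compl E hE A hA := by
    rw [inter_comm, ← sdiff_eq, ← sdiff_self_inter, inter_comm]
    exact hC.diff_mem hA (hE A hA)
  measurableSet_iUnion f hf A hA := by
    rw [iUnion_inter]
    exact hC.iUnion_mem fun n => hf n A hA

theorem IsSigmaRing.measurableSet_of_mem (hC : IsSigmaRing C) (hA : A ∈ C) :
    MeasurableSet[hC.locallyMeasurable] A :=
  fun _ hB => hC.inter_mem hA hB

theorem measurableSet_locallyMeasurable_genSR {E : Set α} (h : ∀ A ∈ D, E ∩ A ∈ genSR D) :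
    MeasurableSet[(isSigmaRing_genSR D).locallyMeasurable] E := by
  have hD := isSigmaRing_genSR D
  refine genSR_subset (C := {A | E ∩ A ∈ genSR D}) ⟨?_, fun A B hA hB => ?_, fun f hf => ?_⟩ h
  · simpa only [mem_ofPred_eq, inter_empty] using hD.empty_mem
  · rw [mem_ofPred_eq, inter_sdiff_distrib_left]
    exact hD.diff_mem hA hB
  · rw [mem_ofPred_eq, inter_iUnion]
    exact hD.iUnion_mem hf

end SigmaRing

section Measure

variable {α : Type*} {C D : Set (Set α)} {μ : Set α → ℝ≥0∞} {A B : Set α}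

theorem isMeasure_coe {_ : MeasurableSpace α} (ρ : Measure α) (h : ∀ A ∈ C, MeasurableSet A) :
    IsMeasure C ρ :=
  ⟨measure_empty, fun _ hf hd => measure_iUnion hd fun n => h _ (hf n)⟩

namespace IsMeasure

theorem mono_family (hμ : IsMeasure C μ) (h : D ⊆ C) : IsMeasure D μ :=
  ⟨hμ.1, fun f hf => hμ.2 f fun n => h (hf n)⟩

theorem iSup_of_directed {ι : Type*} {m : ι → Set α → ℝ≥0∞} (hm : ∀ i, IsMeasure C (m i))
    (hd : Directed (· ≤ ·) m) : IsMeasure C (⨆ i, m i) := by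
  refine ⟨by simp only [iSup_apply, (hm _).1, ENNReal.iSup_zero], fun f hf hdisj => ?_⟩
  have sum_iSup (s : Finset ℕ) : ∑ n ∈ s, ⨆ i, m i (f n) = ⨆ i, ∑ n ∈ s, m i (f n) :=
    ENNReal.finsetSum_iSup fun i j =>
      (hd i j).imp fun _ hk n => ⟨hk.1 (f n), hk.2 (f n)⟩
  simp_rw [iSup_apply, (hm _).2 f hf hdisj, ENNReal.tsum_eq_iSup_sum, sum_iSup]
  exact iSup_comm

/-- The trace `E ↦ μ (E ∩ A)` of a measure on a σ-ring on a member `A` of the σ-ring, as a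
Mathlib measure on the locally measurable sets. -/
noncomputable def trace (hμ : IsMeasure C μ) (hC : IsSigmaRing C) (hA : A ∈ C) :
    @Measure α hC.locallyMeasurable :=
  @Measure.ofMeasurable α hC.locallyMeasurable (fun E _ => μ (E ∩ A))
    (by rw [empty_inter, hμ.1])
    (fun f hf hd => by
      rw [iUnion_inter]
      exact hμ.2 _ (fun n => hf n A hA)
        fun i j hij => (hd hij).mono inter_subset_left inter_subset_left)

variable (hμ : IsMeasure C μ) (hC : IsSigmaRing C)
include hμ hC

theorem trace_apply (hA : A ∈ C) {E : Set α} (hE : MeasurableSet[hC.locallyMeasurable] E) :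
    hμ.trace hC hA E = μ (E ∩ A) :=
  @Measure.ofMeasurable_apply α hC.locallyMeasurable _ _ _ E hE

theorem trace_univ (hA : A ∈ C) : hμ.trace hC hA univ = μ A := by
  rw [hμ.trace_apply hC hA MeasurableSet.univ, univ_inter]

theorem isFiniteMeasure_trace (hA : A ∈ C) (h : μ A < ⊤) :
    @IsFiniteMeasure α hC.locallyMeasurable (hμ.trace hC hA) :=
  ⟨by rwa [hμ.trace_univ]⟩

theorem mono (hA : A ∈ C) (hB : B ∈ C) (h : A ⊆ B) : μ A ≤ μ B :=
  calc
    μ A = hμ.trace hC hB A := by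
      rw [hμ.trace_apply hC hB (hC.measurableSet_of_mem hA), inter_eq_left.2 h]
    _ ≤ hμ.trace hC hB univ := measure_mono (subset_univ A)
    _ = μ B := hμ.trace_univ hC hB

theorem union_le (hA : A ∈ C) (hB : B ∈ C) : μ (A ∪ B) ≤ μ A + μ B := by
  have hAB := hC.union_mem hA hB
  have h := measure_union_le (μ := hμ.trace hC hAB) A B
  rwa [hμ.trace_apply hC hAB (hC.measurableSet_of_mem hA),
    hμ.trace_apply hC hAB (hC.measurableSet_of_mem hB),
    hμ.trace_apply hC hAB (hC.measurableSet_of_mem hAB), inter_self,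
    inter_eq_left.2 subset_union_left, inter_eq_left.2 subset_union_right] at h

theorem trace_mono (hA : A ∈ C) (hB : B ∈ C) (h : A ⊆ B) :
    hμ.trace hC hA ≤ hμ.trace hC hB := by
  refine Measure.le_iff.2 fun E hE => ?_
  rw [hμ.trace_apply hC hA hE, hμ.trace_apply hC hB hE]
  exact hμ.mono hC (hE A hA) (hE B hB) (inter_subset_inter_right _ h)

end IsMeasure

/-- The members of `C` of finite measure. -/
def finiteMeasureSets (C : Set (Set α)) (μ : Set α → ℝ≥0∞) : Set (Set α) :=
  {A | A ∈ C ∧ μ A < ⊤}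

theorem mem_finiteMeasureSets_of_subset (hμ : IsMeasure C μ) (hC : IsSigmaRing C)
    (hA : A ∈ finiteMeasureSets C μ) (hB : B ∈ C) (h : B ⊆ A) : B ∈ finiteMeasureSets C μ :=
  ⟨hB, (hμ.mono hC hB hA.1 h).trans_lt hA.2⟩

theorem directedOn_finiteMeasureSets (hμ : IsMeasure C μ) (hC : IsSigmaRing C) :
    DirectedOn (· ≤ ·) (finiteMeasureSets C μ) :=
  directedOn_of_sup_mem fun _ _ hA hB => ⟨hC.union_mem hA.1 hB.1,
    (hμ.union_le hC hA.1 hB.1).trans_lt (ENNReal.add_lt_top.2 ⟨hA.2, hB.2⟩)⟩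

end Measure

section SigmaFinite

variable {α : Type*} {C D : Set (Set α)} {μ ν : Set α → ℝ≥0∞} {A : Set α}

theorem mem_sigmaFin_of_lt_top (hA : A ∈ C) (h : μ A < ⊤) : A ∈ sigmaFin C μ :=
  ⟨fun _ => A, fun _ => ⟨hA, h⟩, (iUnion_const A).symm⟩

theorem eq_top_of_notMem_sigmaFin (hA : A ∈ C) (h : A ∉ sigmaFin C μ) : μ A = ⊤ :=
  not_lt_top_iff.1 (mt (mem_sigmaFin_of_lt_top hA) h)

theorem sigmaFin_subset (hD : IsSigmaRing D) (h : finiteMeasureSets C μ ⊆ D) :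
    sigmaFin C μ ⊆ D := by
  rintro _ ⟨g, hg, rfl⟩
  exact hD.iUnion_mem fun n => h (hg n)

theorem isSigmaRing_sigmaFin (hμ : IsMeasure C μ) (hC : IsSigmaRing C) :
    IsSigmaRing (sigmaFin C μ) := by
  refine ⟨mem_sigmaFin_of_lt_top hC.empty_mem (by simp only [hμ.1, ENNReal.zero_lt_top]), ?_, ?_⟩
  · rintro _ B ⟨g, hg, rfl⟩ hB
    have hBC : B ∈ C := sigmaFin_subset hC (fun _ hA => hA.1) hB
    exact ⟨fun n => g n \ B, fun n => mem_finiteMeasureSets_of_subset hμ hC (hg n)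
      (hC.diff_mem (hg n).1 hBC) sdiff_subset, iUnion_sdiff B g⟩
  · intro f hf
    choose g hg hfg using hf
    exact ⟨fun n => g n.unpair.1 n.unpair.2, fun n => hg _ _, by
      rw [iUnion_unpair, iUnion_congr hfg]⟩

theorem eqOn_of_eqOn_sigmaFin (hσ : sigmaFin C μ = sigmaFin C ν)
    (h : EqOn μ ν (sigmaFin C μ)) : EqOn μ ν C := by
  intro A hA
  by_cases hAσ : A ∈ sigmaFin C μ
  · exact h hAσ
  · exact (eq_top_of_notMem_sigmaFin hA hAσ).trans
      (eq_top_of_notMem_sigmaFin hA (hσ ▸ hAσ)).symm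

end SigmaFinite

section PiSystem

variable {α : Type*} {D : Set (Set α)} {μ ν : Set α → ℝ≥0∞}

theorem IsMeasure.eq_inter_of_eqOn_piSystem (hμ : IsMeasure (genSR D) μ)
    (hν : IsMeasure (genSR D) ν) (hD : IsPiSystem D) (h : EqOn μ ν D) {Q : Set α} (hQ : Q ∈ D)
    (hQμ : μ Q < ⊤) {E : Set α} (hE : E ∈ genSR D) : μ (E ∩ Q) = ν (E ∩ Q) := by
  have hR := isSigmaRing_genSR D
  have hQR := subset_genSR D hQ
  have := hμ.isFiniteMeasure_trace hR hQR hQμ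
  have trace_eq : ∀ A ∈ D, hμ.trace hR hQR A = hν.trace hR hQR A := by
    intro A hA
    have hAm := hR.measurableSet_of_mem (subset_genSR D hA)
    rw [hμ.trace_apply hR hQR hAm, hν.trace_apply hR hQR hAm]
    obtain hAQ | hAQ := (A ∩ Q).eq_empty_or_nonempty
    · rw [hAQ, hμ.1, hν.1]
    · exact h (hD A hA Q hQ hAQ)
  have hEm := hR.measurableSet_of_mem hE
  rw [← hμ.trace_apply hR hQR hEm, ← hν.trace_apply hR hQR hEm]
  refine ext_on_measurableSpace_of_generate_finite hR.locallyMeasurable D trace_eq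
    (MeasurableSpace.generateFrom_le fun A hA => hR.measurableSet_of_mem (subset_genSR D hA))
    rfl hD ?_ (measurableSet_of_mem_genSR (fun A => MeasurableSpace.measurableSet_generateFrom) hE)
  rw [hμ.trace_univ, hν.trace_univ, h hQ]

theorem IsMeasure.eqOn_genSR_of_eqOn_piSystem (hμ : IsMeasure (genSR D) μ)
    (hν : IsMeasure (genSR D) ν) (hD : IsPiSystem D) (hfin : ∀ A ∈ D, μ A < ⊤)
    (h : EqOn μ ν D) : EqOn μ ν (genSR D) := by
  have hR := isSigmaRing_genSR D
  -- Quantifying over `E'` lets a countable union be made disjoint by shrinking `E'`.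
  let good : Set (Set α) := {E ∈ genSR D | ∀ E' ∈ genSR D, μ (E' ∩ E) = ν (E' ∩ E)}
  suffices hgood : genSR D ⊆ good by
    intro E hE
    simpa only [inter_self] using (hgood hE).2 E hE
  refine genSR_subset ⟨⟨hR.empty_mem, fun E' _ => ?_⟩, ?_, ?_⟩ fun Q hQ =>
    ⟨subset_genSR D hQ, fun E' => hμ.eq_inter_of_eqOn_piSystem hν hD h hQ (hfin Q hQ)⟩
  · rw [inter_empty, hμ.1, hν.1]
  · rintro E₁ E₂ ⟨hE₁, h₁⟩ ⟨hE₂, -⟩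
    refine ⟨hR.diff_mem hE₁ hE₂, fun E' hE' => ?_⟩
    rw [inter_sdiff_left_comm, inter_comm]
    exact h₁ _ (hR.diff_mem hE' hE₂)
  · intro f hf
    refine ⟨hR.iUnion_mem fun n => (hf n).1, fun E' hE' => ?_⟩
    have hmem (n : ℕ) : E' ∩ disjointed f n ∈ genSR D :=
      hR.inter_mem hE' (hR.disjointed_mem (fun n => (hf n).1) n)
    have hdisj : Pairwise (Function.onFun Disjoint fun n => E' ∩ disjointed f n) := fun i j hij =>
      (disjoint_disjointed f hij).mono inter_subset_right inter_subset_right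
    rw [← iUnion_disjointed, inter_iUnion, hμ.2 _ hmem hdisj, hν.2 _ hmem hdisj]
    refine tsum_congr fun n => ?_
    have heq := (hf n).2 _ (hmem n)
    rwa [inter_assoc, inter_eq_left.2 (disjointed_subset f n)] at heq

end PiSystem

section ExtendTop

variable {α : Type*} {C D : Set (Set α)} {ρ : Set α → ℝ≥0∞}

open Classical in
/-- The extension of the set function `ρ` on `D` by the value `⊤` outside `D`. -/
noncomputable def extendTop (D : Set (Set α)) (ρ : Set α → ℝ≥0∞) (A : Set α) : ℝ≥0∞ :=
  if A ∈ D then ρ A else ⊤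

theorem extendTop_of_mem {A : Set α} (hA : A ∈ D) : extendTop D ρ A = ρ A := if_pos hA

theorem extendTop_of_notMem {A : Set α} (hA : A ∉ D) : extendTop D ρ A = ⊤ := if_neg hA

theorem isMeasure_extendTop (hρ : IsMeasure D ρ) (hD : IsSigmaRing D)
    (hCD : ∀ E ∈ C, MeasurableSet[hD.locallyMeasurable] E) : IsMeasure C (extendTop D ρ) := by
  refine ⟨by rw [extendTop_of_mem hD.empty_mem, hρ.1], fun f hf hd => ?_⟩
  by_cases h : ∀ n, f n ∈ D
  · simp_rw [extendTop_of_mem (hD.iUnion_mem h), extendTop_of_mem (h _)]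
    exact hρ.2 f h hd
  · obtain ⟨n, hn⟩ := not_forall.1 h
    have hU : (⋃ n, f n) ∉ D := fun hU => hn <| by
      simpa only [inter_eq_left.2 (subset_iUnion f n)] using hCD _ (hf n) _ hU
    rw [extendTop_of_notMem hU]
    exact (ENNReal.tsum_eq_top_of_eq_top ⟨n, extendTop_of_notMem hn⟩).symm

theorem sigmaFin_extendTop_genSR (hC : IsSigmaRing C)
    (hρ : IsMeasure C (extendTop (genSR D) ρ)) (hDC : D ⊆ C) (hfin : ∀ A ∈ D, ρ A < ⊤) :
    sigmaFin C (extendTop (genSR D) ρ) = genSR D := by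
  refine Subset.antisymm (sigmaFin_subset (isSigmaRing_genSR D) fun A hA => ?_)
    (genSR_subset (isSigmaRing_sigmaFin hρ hC) fun A hA => ?_)
  · by_contra hAD
    exact hA.2.ne (extendTop_of_notMem hAD)
  · refine mem_sigmaFin_of_lt_top (hDC hA) ?_
    rw [extendTop_of_mem (subset_genSR D hA)]
    exact hfin A hA

end ExtendTop

section Product

variable {α β : Type*} {S : Set (Set α)} {T : Set (Set β)} {μ : Set α → ℝ≥0∞} {ν : Set β → ℝ≥0∞}

/-- The rectangles whose sides have finite measure; they generate the σ-ring on which the Halmos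
product of the σ-finite components lives. -/
def finiteRectangles (S : Set (Set α)) (T : Set (Set β)) (μ : Set α → ℝ≥0∞) (ν : Set β → ℝ≥0∞) :
    Set (Set (α × β)) :=
  {R | ∃ A ∈ S, ∃ B ∈ T, μ A < ⊤ ∧ ν B < ⊤ ∧ R = A ×ˢ B}

theorem finiteRectangles_subset_prodSR : finiteRectangles S T μ ν ⊆ prodSR S T := by
  rintro _ ⟨A, hA, B, hB, -, -, rfl⟩
  exact subset_genSR _ ⟨A, hA, B, hB, rfl⟩

theorem lt_top_of_mem_finiteRectangles {ρ : Set (α × β) → ℝ≥0∞}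
    (hρ : ∀ A ∈ S, ∀ B ∈ T, μ A < ⊤ → ν B < ⊤ → ρ (A ×ˢ B) = μ A * ν B) {R : Set (α × β)}
    (hR : R ∈ finiteRectangles S T μ ν) : ρ R < ⊤ := by
  obtain ⟨A, hA, B, hB, hμA, hνB, rfl⟩ := hR
  rw [hρ A hA B hB hμA hνB]
  exact ENNReal.mul_lt_top hμA hνB

section Halmos

variable (hS : IsSigmaRing S) (hT : IsSigmaRing T) (hμ : IsMeasure S μ) (hν : IsMeasure T ν)
include hS hT hμ hν

theorem prod_inter_mem_finiteRectangles {A : Set α} {B : Set β} (hA : A ∈ S) (hB : B ∈ T)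
    {R : Set (α × β)} (hR : R ∈ finiteRectangles S T μ ν) :
    A ×ˢ B ∩ R ∈ finiteRectangles S T μ ν := by
  obtain ⟨A', hA', B', hB', hμA', hνB', rfl⟩ := hR
  have hAA' := mem_finiteMeasureSets_of_subset hμ hS ⟨hA', hμA'⟩ (hS.inter_mem hA hA')
    inter_subset_right
  have hBB' := mem_finiteMeasureSets_of_subset hν hT ⟨hB', hνB'⟩ (hT.inter_mem hB hB')
    inter_subset_right
  exact ⟨_, hAA'.1, _, hBB'.1, hAA'.2, hBB'.2, prod_inter_prod⟩

theorem isPiSystem_finiteRectangles : IsPiSystem (finiteRectangles S T μ ν) := by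
  rintro _ ⟨A, hA, B, hB, -, -, rfl⟩ R hR -
  exact prod_inter_mem_finiteRectangles hS hT hμ hν hA hB hR

theorem measurableSet_locallyMeasurable_of_mem_prodSR {E : Set (α × β)} (hE : E ∈ prodSR S T) :
    MeasurableSet[(isSigmaRing_genSR (finiteRectangles S T μ ν)).locallyMeasurable] E := by
  refine measurableSet_of_mem_genSR ?_ hE
  rintro _ ⟨A, hA, B, hB, rfl⟩
  exact measurableSet_locallyMeasurable_genSR fun R hR =>
    subset_genSR _ (prod_inter_mem_finiteRectangles hS hT hμ hν hA hB hR)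

/-- The product of the traces of `μ` and `ν` on sets of finite measure. -/
noncomputable def traceProd (p : finiteMeasureSets S μ × finiteMeasureSets T ν) :
    Set (α × β) → ℝ≥0∞ :=
  letI := hS.locallyMeasurable
  letI := hT.locallyMeasurable
  (hμ.trace hS p.1.2.1).prod (hν.trace hT p.2.2.1)

theorem isMeasure_traceProd (p : finiteMeasureSets S μ × finiteMeasureSets T ν) :
    IsMeasure (prodSR S T) (traceProd hS hT hμ hν p) := by
  let _ := hS.locallyMeasurable
  let _ := hT.locallyMeasurable
  refine isMeasure_coe _ fun E hE => measurableSet_of_mem_genSR ?_ hE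
  rintro _ ⟨A, hA, B, hB, rfl⟩
  exact (hS.measurableSet_of_mem hA).prod (hT.measurableSet_of_mem hB)

theorem traceProd_prod (p : finiteMeasureSets S μ × finiteMeasureSets T ν) {A : Set α} {B : Set β}
    (hA : A ∈ S) (hB : B ∈ T) :
    traceProd hS hT hμ hν p (A ×ˢ B) = μ (A ∩ p.1) * ν (B ∩ p.2) := by
  let _ := hS.locallyMeasurable
  let _ := hT.locallyMeasurable
  have := hν.isFiniteMeasure_trace hT p.2.2.1 p.2.2.2
  rw [traceProd, Measure.prod_prod, hμ.trace_apply hS _ (hS.measurableSet_of_mem hA),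
    hν.trace_apply hT _ (hT.measurableSet_of_mem hB)]

theorem monotone_traceProd : Monotone (traceProd hS hT hμ hν) := by
  intro p q hpq
  let _ := hS.locallyMeasurable
  let _ := hT.locallyMeasurable
  have := hν.isFiniteMeasure_trace hT q.2.2.1 q.2.2.2
  exact Measure.prod_mono (hμ.trace_mono hS _ _ hpq.1) (hν.trace_mono hT _ _ hpq.2)

theorem directed_traceProd : Directed (· ≤ ·) (traceProd hS hT hμ hν) := by
  intro p q
  obtain ⟨A, hA, hpA, hqA⟩ := directedOn_finiteMeasureSets hμ hS _ p.1.2 _ q.1.2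
  obtain ⟨B, hB, hpB, hqB⟩ := directedOn_finiteMeasureSets hν hT _ p.2.2 _ q.2.2
  exact ⟨(⟨A, hA⟩, ⟨B, hB⟩), monotone_traceProd hS hT hμ hν ⟨hpA, hpB⟩,
    monotone_traceProd hS hT hμ hν ⟨hqA, hqB⟩⟩

/-- The Halmos product of the σ-finite components of `μ` and `ν`, as the supremum of the products
of their traces on sets of finite measure. It is meaningful on the σ-ring generated by the finite
rectangles. -/
noncomputable def halmosProd : Set (α × β) → ℝ≥0∞ :=
  ⨆ p, traceProd hS hT hμ hν p

theorem isMeasure_halmosProd : IsMeasure (prodSR S T) (halmosProd hS hT hμ hν) :=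
  .iSup_of_directed (isMeasure_traceProd hS hT hμ hν) (directed_traceProd hS hT hμ hν)

theorem halmosProd_prod {A : Set α} {B : Set β} (hA : A ∈ S) (hB : B ∈ T) (hμA : μ A < ⊤)
    (hνB : ν B < ⊤) : halmosProd hS hT hμ hν (A ×ˢ B) = μ A * ν B := by
  rw [halmosProd, iSup_apply]
  refine le_antisymm (iSup_le fun p => ?_) (le_iSup_of_le (⟨A, hA, hμA⟩, ⟨B, hB, hνB⟩) ?_)
  · rw [traceProd_prod hS hT hμ hν p hA hB]
    exact mul_le_mul' (hμ.mono hS (hS.inter_mem hA p.1.2.1) hA inter_subset_left)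
      (hν.mono hT (hT.inter_mem hB p.2.2.1) hB inter_subset_left)
  · rw [traceProd_prod hS hT hμ hν _ hA hB, inter_self, inter_self]

theorem isProdMeasure_extendTop_halmosProd :
    IsProdMeasure S T μ ν
      (extendTop (genSR (finiteRectangles S T μ ν)) (halmosProd hS hT hμ hν)) := by
  have hP : IsSigmaRing (prodSR S T) := isSigmaRing_genSR _
  have hF : finiteRectangles S T μ ν ⊆ prodSR S T := finiteRectangles_subset_prodSR
  have hext : IsMeasure (prodSR S T)
      (extendTop (genSR (finiteRectangles S T μ ν)) (halmosProd hS hT hμ hν)) :=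
    isMeasure_extendTop ((isMeasure_halmosProd hS hT hμ hν).mono_family (genSR_subset hP hF))
      (isSigmaRing_genSR _) fun _ => measurableSet_locallyMeasurable_of_mem_prodSR hS hT hμ hν
  refine ⟨hext, fun A hA B hB hμA hνB => ?_, sigmaFin_extendTop_genSR hP hext hF ?_⟩
  · rw [extendTop_of_mem (subset_genSR (finiteRectangles S T μ ν) ⟨A, hA, B, hB, hμA, hνB, rfl⟩)]
    exact halmosProd_prod hS hT hμ hν hA hB hμA hνB
  · exact fun R => lt_top_of_mem_finiteRectangles fun A hA B hB =>
      halmosProd_prod hS hT hμ hν hA hB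

theorem IsProdMeasure.eqOn {lam lam' : Set (α × β) → ℝ≥0∞} (h : IsProdMeasure S T μ ν lam)
    (h' : IsProdMeasure S T μ ν lam') : EqOn lam lam' (prodSR S T) := by
  obtain ⟨hm, hrect, hσ⟩ := h
  obtain ⟨hm', hrect', hσ'⟩ := h'
  have hsub : genSR (finiteRectangles S T μ ν) ⊆ prodSR S T :=
    genSR_subset (isSigmaRing_genSR _) finiteRectangles_subset_prodSR
  refine eqOn_of_eqOn_sigmaFin (hσ.trans hσ'.symm) (hσ ▸ ?_)
  refine (hm.mono_family hsub).eqOn_genSR_of_eqOn_piSystem (hm'.mono_family hsub)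
    (isPiSystem_finiteRectangles hS hT hμ hν)
    (fun R => lt_top_of_mem_finiteRectangles hrect) ?_
  rintro _ ⟨A, hA, B, hB, hμA, hνB, rfl⟩
  rw [hrect A hA B hB hμA hνB, hrect' A hA B hB hμA hνB]

end Halmos

end Product

/-- existence and uniqueness of the product of arbitrary measures
on σ-rings, characterized by its value on rectangles of finite-measure sets and
by its σ-ring of σ-finite sets. -/
theorem stmt_9 {α β : Type*} (S : Set (Set α)) (T : Set (Set β))
    (μ : Set α → ℝ≥0∞) (ν : Set β → ℝ≥0∞)
    (hS : IsSigmaRing S) (hT : IsSigmaRing T)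
    (hμ : IsMeasure S μ) (hν : IsMeasure T ν) :
    ∃ lam : Set (α × β) → ℝ≥0∞, IsProdMeasure S T μ ν lam ∧
      ∀ lam' : Set (α × β) → ℝ≥0∞, IsProdMeasure S T μ ν lam' →
        ∀ C ∈ prodSR S T, lam' C = lam C := by
  have hprod := isProdMeasure_extendTop_halmosProd hS hT hμ hν
  exact ⟨_, hprod, fun _ hprod' _ hC => hprod'.eqOn hS hT hμ hν hprod hC⟩
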